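/- Let 1 < p ≤ 2 with Hölder conjugate p*. Then for every ε ∈ (0,1), every m ∈ ℕ, every 1 ≤ n < m with n ≤ ε·σ_m²·m^{2/p*}, and all semiaxes σ₁ ≥ σ₂ ≥ … ≥ σ_m > 0, if G_{n,m} is an n×m random matrix with i.i.d. standard Gaussian entries, then Pr[rad(E^m_{p,σ}, ker G_{n,m}) ≥ σ₁/(1 + σ₁)] ≥ 1 − ε. -/

import Mathlib

open MeasureTheory ProbabilityTheory
open scoped ENNReal NNReal

/-- The `ℓ_p`-(quasi-)norm on `ℝ^m`, for `0 < p ≤ ∞`. -/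
noncomputable def lpnorm (p : ℝ≥0∞) {m : ℕ} (x : Fin m → ℝ) : ℝ :=
  if p = ∞ then ⨆ j, |x j| else (∑ j, |x j| ^ p.toReal) ^ (1 / p.toReal)

/-- The `ℓ_p`-ellipsoid with semiaxes `σ`. -/
noncomputable def ellipsoid (p : ℝ≥0∞) {m : ℕ} (σ : Fin m → ℝ) : Set (Fin m → ℝ) :=
  {x | lpnorm p (fun j => x j / σ j) ≤ 1}

/-- `rad_q(K, E)`: the supremum of the `ℓ_q`-norm over `K ∩ E`. -/
noncomputable def radq (q : ℝ≥0∞) {m : ℕ} (K E : Set (Fin m → ℝ)) : ℝ :=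
  sSup (lpnorm q '' (K ∩ E))

/-- The distribution of an `n × m` random matrix with i.i.d. standard Gaussian entries. -/
noncomputable def gaussianMatrix (n m : ℕ) : Measure (Fin n → Fin m → ℝ) :=
  Measure.pi fun _ : Fin n => Measure.pi fun _ : Fin m => gaussianReal 0 1

/-- The kernel of a matrix `A ∈ ℝ^{n×m}`, as a subset of `ℝ^m`. -/
def kerSet {n m : ℕ} (A : Fin n → Fin m → ℝ) : Set (Fin m → ℝ) :=
  {x | ∀ i, ∑ j, A i j * x j = 0}

/-- The Hölder conjugate `p*` of `p ∈ (1, ∞]`, as a real number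
(with the convention `(∞ : ℝ≥0∞).toReal = 0`, so `pstar ∞ = 1`). -/
noncomputable def pstar (p : ℝ≥0∞) : ℝ := (1 - 1 / p.toReal)⁻¹

/-!
Let `P` be the orthogonal projection onto the kernel and `t = ⟨e₁, P e₁⟩`. The test vector
`x = P e₁` satisfies `x₁ = ‖x‖₂² = t`, so splitting off its first coordinate and comparing `ℓ_p`
with `ℓ₂` gives `‖x/σ‖_p ≤ t/σ₁ + a √(t (1 - t))` with `a = m^{1/p - 1/2}/σ_m`. If `a² (1 - t) ≤ 1`,
this is at most `‖x‖₂ (1/σ₁ + 1)`, which gives the lower bound `σ₁/(1 + σ₁)` on the radius.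

Now `1 - t` is the leverage score of the first column; the leverage scores of the `m` columns add up
to the rank, which is at most `n`, and have the same mean because the columns are exchangeable. So
`1 - t` has mean at most `n/m`, and Markov's inequality bounds the probability that `1 - t ≥ a⁻²` by
`n a²/m ≤ ε`. If `a ≤ 1`, the ellipsoid contains the Euclidean unit ball, and any nonzero vector of
the kernel gives radius `≥ 1`.
-/

section LpNorm

variable {p q : ℝ≥0∞} {m : ℕ}

lemma lpnorm_eq_norm_toLp [hp : Fact (1 ≤ p)] (x : Fin m → ℝ) :
    lpnorm p x = ‖WithLp.toLp p x‖ := by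
  rcases eq_or_ne p ∞ with rfl | hp_top
  · simp [lpnorm, PiLp.norm_eq_ciSup]
  · have hp_pos : 0 < p.toReal := ENNReal.toReal_pos (one_pos.trans_le hp.out).ne' hp_top
    simp [lpnorm, hp_top, PiLp.norm_eq_sum hp_pos]

lemma lpnorm_two_sq (x : Fin m → ℝ) : lpnorm 2 x ^ 2 = ∑ k, x k ^ 2 := by
  simp [lpnorm_eq_norm_toLp, EuclideanSpace.norm_sq_eq]

lemma lpnorm_nonneg (x : Fin m → ℝ) : 0 ≤ lpnorm p x := by
  unfold lpnorm
  split_ifs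
  · exact Real.iSup_nonneg fun _ => abs_nonneg _
  · positivity

lemma lpnorm_add_le [Fact (1 ≤ p)] (x y : Fin m → ℝ) :
    lpnorm p (x + y) ≤ lpnorm p x + lpnorm p y := by
  simpa only [lpnorm_eq_norm_toLp, WithLp.toLp_add] using norm_add_le _ _

lemma lpnorm_smul [Fact (1 ≤ p)] (c : ℝ) (x : Fin m → ℝ) :
    lpnorm p (c • x) = |c| * lpnorm p x := by
  simp only [lpnorm_eq_norm_toLp, WithLp.toLp_smul, norm_smul, Real.norm_eq_abs]

lemma lpnorm_eq_zero [Fact (1 ≤ p)] {x : Fin m → ℝ} : lpnorm p x = 0 ↔ x = 0 := by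
  rw [lpnorm_eq_norm_toLp, norm_eq_zero, WithLp.toLp_eq_zero]

lemma lpnorm_single [Fact (1 ≤ p)] (j : Fin m) (c : ℝ) : lpnorm p (Pi.single j c) = |c| := by
  rw [lpnorm_eq_norm_toLp, PiLp.toLp_single, PiLp.norm_single, Real.norm_eq_abs]

lemma lpnorm_le_rpow_mul_lpnorm (hp : p ≠ 0) (hpq : p ≤ q) (hq : q ≠ ∞) (x : Fin m → ℝ) :
    lpnorm p x ≤ (m : ℝ) ^ (1 / p.toReal - 1 / q.toReal) * lpnorm q x := by
  have hp_top : p ≠ ∞ := ne_top_of_le_ne_top hq hpq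
  have hp_pos : 0 < p.toReal := ENNReal.toReal_pos hp hp_top
  have hpq' : p.toReal ≤ q.toReal := ENNReal.toReal_mono hq hpq
  simp only [lpnorm, hp_top, hq, if_false]
  generalize p.toReal = r at *
  generalize q.toReal = t at *
  have ht : 0 < t := hp_pos.trans_le hpq'
  have power_mean : (∑ k, |x k| ^ r) ^ (t / r) ≤ (m : ℝ) ^ (t / r - 1) * ∑ k, |x k| ^ t := by
    have pow_pow (k : Fin m) : (|x k| ^ r) ^ (t / r) = |x k| ^ t := by
      rw [← Real.rpow_mul (abs_nonneg _), mul_div_cancel₀ _ hp_pos.ne']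
    simpa [pow_pow] using Real.rpow_sum_le_const_mul_sum_rpow_of_nonneg Finset.univ
      ((one_le_div hp_pos).2 hpq') fun k _ => Real.rpow_nonneg (abs_nonneg (x k)) r
  calc (∑ k, |x k| ^ r) ^ (1 / r) = ((∑ k, |x k| ^ r) ^ (t / r)) ^ (1 / t) := by
        rw [← Real.rpow_mul (by positivity)]
        congr 1
        field_simp
    _ ≤ ((m : ℝ) ^ (t / r - 1) * ∑ k, |x k| ^ t) ^ (1 / t) := by gcongr
    _ = (m : ℝ) ^ (1 / r - 1 / t) * (∑ k, |x k| ^ t) ^ (1 / t) := by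
        rw [Real.mul_rpow (by positivity) (by positivity), ← Real.rpow_mul (by positivity)]
        congr 2
        field_simp

lemma lpnorm_two_div_le {s : ℝ} (hs : 0 < s) {σ : Fin m → ℝ} (hσ : ∀ k, s ≤ σ k)
    (x : Fin m → ℝ) : lpnorm 2 (x / σ) ≤ lpnorm 2 x / s := by
  refine le_of_sq_le_sq ?_ (div_nonneg (lpnorm_nonneg x) hs.le)
  rw [div_pow, lpnorm_two_sq, lpnorm_two_sq, Finset.sum_div]
  gcongr with k
  rw [Pi.div_apply, div_pow]
  gcongr
  exact hσ k

lemma lpnorm_div_le_mul_lpnorm_two (hp : p ≠ 0) (hp2 : p ≤ 2) {s : ℝ} (hs : 0 < s)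
    {σ : Fin m → ℝ} (hσ : ∀ k, s ≤ σ k) (x : Fin m → ℝ) :
    lpnorm p (x / σ) ≤ (m : ℝ) ^ (1 / p.toReal - 1 / 2) / s * lpnorm 2 x := by
  calc lpnorm p (x / σ) ≤ (m : ℝ) ^ (1 / p.toReal - 1 / 2) * lpnorm 2 (x / σ) := by
        simpa using lpnorm_le_rpow_mul_lpnorm hp hp2 ENNReal.ofNat_ne_top (x / σ)
    _ ≤ (m : ℝ) ^ (1 / p.toReal - 1 / 2) * (lpnorm 2 x / s) := by
        gcongr
        exact lpnorm_two_div_le hs hσ x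
    _ = (m : ℝ) ^ (1 / p.toReal - 1 / 2) / s * lpnorm 2 x := by ring

end LpNorm

section Radius

variable {p q : ℝ≥0∞} [Fact (1 ≤ p)] [Fact (1 ≤ q)] {m : ℕ} {σ : Fin m → ℝ}

lemma isCompact_ellipsoid (hσ : ∀ k, σ k ≠ 0) : IsCompact (ellipsoid p σ) := by
  have image_ball : (fun z : PiLp p fun _ : Fin m => ℝ => σ * WithLp.ofLp z) ''
      Metric.closedBall 0 1 = ellipsoid p σ := by
    ext x
    have div_mul : σ * (x / σ) = x := funext fun k => mul_div_cancel₀ (x k) (hσ k)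
    have mul_div (z : Fin m → ℝ) : σ * z / σ = z := funext fun k => mul_div_cancel_left₀ _ (hσ k)
    have mem_iff : x ∈ ellipsoid p σ ↔ WithLp.toLp p (x / σ) ∈ Metric.closedBall 0 1 := by
      rw [mem_closedBall_zero_iff, ← lpnorm_eq_norm_toLp]
      rfl
    rw [mem_iff]
    refine ⟨?_, fun hx => ⟨_, hx, div_mul⟩⟩
    rintro ⟨z, hz, rfl⟩
    simpa only [mul_div] using hz
  rw [← image_ball]
  exact (isCompact_closedBall _ _).image (by fun_prop)

lemma bddAbove_lpnorm_image_ellipsoid (hσ : ∀ k, σ k ≠ 0) :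
    BddAbove (lpnorm q '' ellipsoid p σ) := by
  have lpnorm_continuous : Continuous (lpnorm q : (Fin m → ℝ) → ℝ) := by
    simp_rw [funext lpnorm_eq_norm_toLp]
    fun_prop
  exact (isCompact_ellipsoid hσ).bddAbove_image lpnorm_continuous.continuousOn

lemma lpnorm_div_pos (hσ : ∀ k, σ k ≠ 0) {x : Fin m → ℝ} (hx : x ≠ 0) :
    0 < lpnorm p (x / σ) := by
  refine (lpnorm_nonneg _).lt_of_ne' fun h => hx ?_
  ext k
  simpa [hσ k] using congrFun (lpnorm_eq_zero.1 h) k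

lemma lpnorm_le_lpnorm_div_mul_radq (hσ : ∀ k, σ k ≠ 0) {E : Submodule ℝ (Fin m → ℝ)}
    {x : Fin m → ℝ} (hx : x ∈ E) :
    lpnorm q x ≤ lpnorm p (x / σ) * radq q (ellipsoid p σ) E := by
  rcases eq_or_ne x 0 with rfl | hx0
  · have zero_div_eq : (0 : Fin m → ℝ) / σ = 0 := funext fun k => zero_div (σ k)
    rw [zero_div_eq, lpnorm_eq_zero.2 rfl, lpnorm_eq_zero.2 rfl, zero_mul]
  set B := lpnorm p (x / σ)
  have hB : 0 < B := lpnorm_div_pos hσ hx0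
  have mem_ellipsoid : B⁻¹ • x ∈ ellipsoid p σ := by
    change lpnorm p ((B⁻¹ • x) / σ) ≤ 1
    rw [smul_div_assoc, lpnorm_smul, abs_of_pos (inv_pos.2 hB), inv_mul_cancel₀ hB.ne']
  have scaled : lpnorm q (B⁻¹ • x) ≤ radq q (ellipsoid p σ) E :=
    le_csSup ((bddAbove_lpnorm_image_ellipsoid hσ).mono (Set.image_mono Set.inter_subset_left))
      ⟨_, ⟨mem_ellipsoid, E.smul_mem _ hx⟩, rfl⟩
  rwa [lpnorm_smul, abs_of_pos (inv_pos.2 hB), inv_mul_le_iff₀ hB] at scaled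

lemma lpnorm_two_sq_update_zero (x : Fin m → ℝ) (j : Fin m) :
    lpnorm 2 (Function.update x j 0) ^ 2 = lpnorm 2 x ^ 2 - x j ^ 2 := by
  simp only [lpnorm_two_sq, Function.update_apply]
  rw [eq_sub_iff_add_eq, ← Finset.sum_erase_add _ _ (Finset.mem_univ j),
    ← Finset.sum_erase_add (f := fun k => x k ^ 2) _ (Finset.mem_univ j)]
  simp only [if_true]
  rw [Finset.sum_congr rfl fun k hk => by rw [if_neg (Finset.ne_of_mem_erase hk)]]
  ring

lemma lpnorm_div_le_abs_div_add (x : Fin m → ℝ) (j : Fin m) :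
    lpnorm p (x / σ) ≤ |x j / σ j| + lpnorm p (Function.update x j 0 / σ) := by
  have split : x / σ = Pi.single j (x j / σ j) + Function.update x j 0 / σ := by
    ext k
    rcases eq_or_ne k j with rfl | hk <;> simp [*]
  rw [split, ← lpnorm_single (p := p)]
  exact lpnorm_add_le _ _

variable {a : ℝ} {E : Submodule ℝ (Fin m → ℝ)}

lemma one_le_radq_two (hσ : ∀ k, σ k ≠ 0)
    (h_compare : ∀ y : Fin m → ℝ, lpnorm p (y / σ) ≤ lpnorm 2 y) (hE : E ≠ ⊥) :
    1 ≤ radq 2 (ellipsoid p σ) E := by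
  obtain ⟨x, hxE, hx0⟩ := E.ne_bot_iff.1 hE
  have div_pos : 0 < lpnorm p (x / σ) := lpnorm_div_pos hσ hx0
  refine le_of_mul_le_mul_left ?_ div_pos
  calc lpnorm p (x / σ) * 1 ≤ lpnorm 2 x := by simpa using h_compare x
    _ ≤ lpnorm p (x / σ) * radq 2 (ellipsoid p σ) E := lpnorm_le_lpnorm_div_mul_radq hσ hxE

lemma lpnorm_div_le_of_lpnorm_two_sq_eq {j : Fin m} (hσ : 0 < σ j)
    (h_compare : ∀ y : Fin m → ℝ, lpnorm p (y / σ) ≤ a * lpnorm 2 y)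
    {x : Fin m → ℝ} (hxj : lpnorm 2 x ^ 2 = x j) (ha : a ^ 2 * (1 - x j) ≤ 1) :
    lpnorm p (x / σ) ≤ lpnorm 2 x * (1 / σ j + 1) := by
  have coord : |x j / σ j| ≤ lpnorm 2 x / σ j := by
    rw [abs_div, abs_of_pos hσ, lpnorm_eq_norm_toLp]
    gcongr
    exact PiLp.norm_apply_le (WithLp.toLp 2 x) j
  have rest : a * lpnorm 2 (Function.update x j 0) ≤ lpnorm 2 x := by
    refine le_of_sq_le_sq ?_ (lpnorm_nonneg x)
    calc (a * lpnorm 2 (Function.update x j 0)) ^ 2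
        = lpnorm 2 x ^ 2 * (a ^ 2 * (1 - x j)) := by
          rw [mul_pow, lpnorm_two_sq_update_zero, hxj]
          ring
      _ ≤ lpnorm 2 x ^ 2 := mul_le_of_le_one_right (sq_nonneg _) ha
  calc lpnorm p (x / σ) ≤ |x j / σ j| + lpnorm p (Function.update x j 0 / σ) :=
        lpnorm_div_le_abs_div_add x j
    _ ≤ lpnorm 2 x / σ j + lpnorm 2 x := add_le_add coord ((h_compare _).trans rest)
    _ = lpnorm 2 x * (1 / σ j + 1) := by ring

lemma div_one_add_le_radq_two (hσ : ∀ k, 0 < σ k)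
    (h_compare : ∀ y : Fin m → ℝ, lpnorm p (y / σ) ≤ a * lpnorm 2 y)
    {x : Fin m → ℝ} (hxE : x ∈ E) {j : Fin m} (hxj : lpnorm 2 x ^ 2 = x j) (hx0 : x ≠ 0)
    (ha : a ^ 2 * (1 - x j) ≤ 1) :
    σ j / (1 + σ j) ≤ radq 2 (ellipsoid p σ) E := by
  have norm_pos : 0 < lpnorm 2 x := (lpnorm_nonneg x).lt_of_ne' (lpnorm_eq_zero.not.2 hx0)
  set R := radq 2 (ellipsoid p σ) E
  have norm_le : lpnorm 2 x ≤ lpnorm p (x / σ) * R :=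
    lpnorm_le_lpnorm_div_mul_radq (fun k => (hσ k).ne') hxE
  have radius_nonneg : 0 ≤ R := by
    refine nonneg_of_mul_nonneg_right (norm_pos.le.trans norm_le) ?_
    exact lpnorm_div_pos (fun k => (hσ k).ne') hx0
  have one_le : 1 ≤ (1 / σ j + 1) * R := by
    refine le_of_mul_le_mul_left ?_ norm_pos
    calc lpnorm 2 x * 1 ≤ lpnorm p (x / σ) * R := by rwa [mul_one]
      _ ≤ lpnorm 2 x * (1 / σ j + 1) * R := by
          gcongr
          exact lpnorm_div_le_of_lpnorm_two_sq_eq (hσ j) h_compare hxj ha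
      _ = lpnorm 2 x * ((1 / σ j + 1) * R) := mul_assoc _ _ _
  have hσj := hσ j
  rw [div_le_iff₀ (by positivity)]
  calc σ j = σ j * 1 := (mul_one _).symm
    _ ≤ σ j * ((1 / σ j + 1) * R) := by gcongr
    _ = R * (1 + σ j) := by field_simp

end Radius

section Leverage

variable {ι κ : Type*} [Fintype ι]

lemma sum_norm_sq_starProjection {𝕜 E : Type*} [RCLike 𝕜] [NormedAddCommGroup E]
    [InnerProductSpace 𝕜 E] [FiniteDimensional 𝕜 E] (b : OrthonormalBasis ι 𝕜 E)
    (V : Submodule 𝕜 E) : ∑ i, ‖V.starProjection (b i)‖ ^ 2 = Module.finrank 𝕜 V := by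
  have proj : LinearMap.IsProj V (V.starProjection : E →ₗ[𝕜] E) :=
    ⟨V.starProjection_apply_mem, fun _ => V.starProjection_eq_self_iff.2⟩
  have trace_eq : (Module.finrank 𝕜 V : 𝕜) = ∑ i, inner 𝕜 (b i) (V.starProjection (b i)) := by
    rw [← proj.trace, LinearMap.trace_eq_sum_inner _ b]
    rfl
  have := congrArg RCLike.re trace_eq
  simp only [← inner_conj_symm (b _), map_sum, RCLike.natCast_re, RCLike.conj_re,
    Submodule.re_inner_starProjection_eq_normSq] at this
  exact this.symm

/-- The row space of the matrix `A`, as a subspace of Euclidean space; its orthogonal complement is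
the kernel of `A`. -/
def rowSpace (A : κ → ι → ℝ) : Submodule ℝ (EuclideanSpace ℝ ι) :=
  Submodule.span ℝ (Set.range fun i => WithLp.toLp 2 (A i))

lemma toLp_mem_rowSpace_orthogonal_iff {n m : ℕ} {A : Fin n → Fin m → ℝ} {x : Fin m → ℝ} :
    WithLp.toLp 2 x ∈ (rowSpace A)ᗮ ↔ x ∈ kerSet A := by
  rw [rowSpace, ← Submodule.span_singleton_le_iff_mem, ← Submodule.isOrtho_iff_le,
    Submodule.isOrtho_comm, Submodule.isOrtho_span]
  simp [kerSet, PiLp.inner_apply, mul_comm]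

variable [DecidableEq ι]

/-- The leverage score of the `j`-th column of `A`: the squared length of the projection of the
`j`-th unit vector onto the row space, i.e. the `j`-th diagonal entry of that projection. -/
noncomputable def leverage (A : κ → ι → ℝ) (j : ι) : ℝ :=
  ‖(rowSpace A).starProjection (EuclideanSpace.single j 1)‖ ^ 2

lemma leverage_nonneg (A : κ → ι → ℝ) (j : ι) : 0 ≤ leverage A j := sq_nonneg _

lemma leverage_le_one (A : κ → ι → ℝ) (j : ι) : leverage A j ≤ 1 := by
  have := (rowSpace A).norm_starProjection_apply_le (EuclideanSpace.single j 1)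
  rw [PiLp.norm_single, norm_one] at this
  exact pow_le_one₀ (norm_nonneg _) this

lemma exists_mem_kerSet_lpnorm_two_sq_eq {n m : ℕ} (A : Fin n → Fin m → ℝ) (j : Fin m) :
    ∃ x ∈ kerSet A, lpnorm 2 x ^ 2 = x j ∧ x j = 1 - leverage A j := by
  set e : EuclideanSpace ℝ (Fin m) := EuclideanSpace.single j 1
  set x : EuclideanSpace ℝ (Fin m) := (rowSpace A)ᗮ.starProjection e
  have norm_sq_eq_coord : ‖x‖ ^ 2 = x j := by
    calc ‖x‖ ^ 2 = inner ℝ x e := ((rowSpace A)ᗮ.re_inner_starProjection_eq_normSq e).symm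
      _ = x j := by simp [e, EuclideanSpace.inner_single_right]
  have pythagoras : ‖x‖ ^ 2 = 1 - leverage A j := by
    have := Submodule.norm_sq_eq_add_norm_sq_starProjection e (rowSpace A)
    rw [PiLp.norm_single, norm_one, one_pow] at this
    exact eq_sub_of_add_eq' this.symm
  refine ⟨x.ofLp, ?_, ?_, norm_sq_eq_coord.symm.trans pythagoras⟩
  · exact toLp_mem_rowSpace_orthogonal_iff.1 (Submodule.starProjection_apply_mem _ _)
  · rw [lpnorm_eq_norm_toLp]
    exact norm_sq_eq_coord

lemma leverage_comp_perm (A : κ → ι → ℝ) (π : Equiv.Perm ι) (j : ι) :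
    leverage (fun i k => A i (π k)) j = leverage A (π j) := by
  let T : EuclideanSpace ℝ ι ≃ₗᵢ[ℝ] EuclideanSpace ℝ ι :=
    LinearIsometryEquiv.piLpCongrLeft 2 ℝ ℝ π.symm
  have map_rowSpace :
      (rowSpace A).map T.toLinearIsometry.toLinearMap = rowSpace fun i k => A i (π k) := by
    rw [rowSpace, Submodule.map_span, ← Set.range_comp]
    rfl
  have map_single : T (EuclideanSpace.single (π j) 1) = EuclideanSpace.single j 1 := by
    simp [T]
  have map_projection : T ((rowSpace A).starProjection (EuclideanSpace.single (π j) 1)) =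
      (rowSpace fun i k => A i (π k)).starProjection (EuclideanSpace.single j 1) := by
    simp only [← map_single, ← map_rowSpace]
    exact T.toLinearIsometry.map_starProjection (rowSpace A) _
  rw [leverage, ← map_projection, T.norm_map, leverage]

lemma sum_leverage_le [Fintype κ] (A : κ → ι → ℝ) : ∑ j, leverage A j ≤ Fintype.card κ := by
  have := sum_norm_sq_starProjection (EuclideanSpace.basisFun ι ℝ) (rowSpace A)
  simp only [EuclideanSpace.basisFun_apply] at this
  unfold leverage
  rw [this]
  exact_mod_cast finrank_range_le_card _

lemma leverage_eq_one_sub_sq_iInf [Fintype κ] (A : κ → ι → ℝ) (j : ι) :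
    leverage A j =
      1 - (⨅ v : κ → ℝ, ‖EuclideanSpace.single j 1 - ∑ i, v i • WithLp.toLp 2 (A i)‖) ^ 2 := by
  set e : EuclideanSpace ℝ ι := EuclideanSpace.single j 1
  let combination (v : κ → ℝ) : rowSpace A :=
    ⟨∑ i, v i • WithLp.toLp 2 (A i), (Submodule.mem_span_range_iff_exists_fun ℝ).2 ⟨v, rfl⟩⟩
  have combination_surjective : Function.Surjective combination := fun ⟨w, hw⟩ =>
    ((Submodule.mem_span_range_iff_exists_fun ℝ).1 hw).imp fun _ hv => Subtype.ext hv
  have dist_eq : ‖(rowSpace A)ᗮ.starProjection e‖ = ⨅ v, ‖e - combination v‖ := by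
    rw [Submodule.starProjection_orthogonal_val, Submodule.starProjection_minimal,
      ← combination_surjective.iInf_comp]
  have pythagoras := Submodule.norm_sq_eq_add_norm_sq_starProjection e (rowSpace A)
  rw [PiLp.norm_single, norm_one, one_pow, dist_eq] at pythagoras
  exact eq_sub_of_add_eq pythagoras.symm

lemma measurable_leverage [Finite κ] (j : ι) :
    Measurable fun A : κ → ι → ℝ => leverage A j := by
  have := Fintype.ofFinite κ
  simp_rw [leverage_eq_one_sub_sq_iInf]
  refine measurable_const.sub (Measurable.pow_const (UpperSemicontinuous.measurable ?_) 2)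
  refine upperSemicontinuous_ciInf (fun A => ⟨0, ?_⟩) fun v => ?_
  · rintro _ ⟨v, rfl⟩
    exact norm_nonneg _
  · exact Continuous.upperSemicontinuous (by fun_prop)

end Leverage

section Exchangeable

variable {ι κ : Type*}

/-- A law of random matrices is column exchangeable if it is invariant under permutations of the
columns. -/
def ColumnExchangeable (μ : Measure (κ → ι → ℝ)) : Prop :=
  ∀ π : Equiv.Perm ι, MeasurePreserving (fun (A : κ → ι → ℝ) i k => A i (π k)) μ μ

variable [Fintype ι]

lemma columnExchangeable_pi [Fintype κ] (ν : Measure ℝ) [SigmaFinite ν] :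
    ColumnExchangeable (Measure.pi fun _ : κ => Measure.pi fun _ : ι => ν) := by
  intro π
  refine measurePreserving_pi (f := fun _ (x : ι → ℝ) k => x (π k)) _ _ fun _ => ?_
  exact measurePreserving_arrowCongr' (fun _ : ι => ν) (fun _ : ι => ν) π.symm
    (MeasurableEquiv.refl ℝ) fun _ => MeasurePreserving.id _

variable {μ : Measure (κ → ι → ℝ)} [DecidableEq ι]

lemma integral_leverage_eq [Finite κ] (hμ : ColumnExchangeable μ) (j k : ι) :
    ∫ A, leverage A j ∂μ = ∫ A, leverage A k ∂μ := by
  have swap_preserving := hμ (Equiv.swap k j)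
  calc ∫ A, leverage A j ∂μ = ∫ A, leverage (fun i l => A i (Equiv.swap k j l)) k ∂μ := by
        simp only [leverage_comp_perm, Equiv.swap_apply_left]
    _ = ∫ A, leverage A k ∂(μ.map fun A i l => A i (Equiv.swap k j l)) :=
        (integral_map swap_preserving.aemeasurable
          (measurable_leverage k).aestronglyMeasurable).symm
    _ = ∫ A, leverage A k ∂μ := by rw [swap_preserving.map_eq]

lemma integrable_leverage [Finite κ] [IsFiniteMeasure μ] (j : ι) :
    Integrable (fun A => leverage A j) μ := by
  refine Integrable.of_bound (measurable_leverage j).aestronglyMeasurable 1 (.of_forall fun A => ?_)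
  rw [Real.norm_of_nonneg (leverage_nonneg A j)]
  exact leverage_le_one A j

variable [Fintype κ] [IsProbabilityMeasure μ]

lemma card_mul_integral_leverage_le (hμ : ColumnExchangeable μ) (j : ι) :
    Fintype.card ι * ∫ A, leverage A j ∂μ ≤ Fintype.card κ := by
  calc Fintype.card ι * ∫ A, leverage A j ∂μ = ∑ k, ∫ A, leverage A k ∂μ := by
        simp [integral_leverage_eq hμ _ j]
    _ = ∫ A, ∑ k, leverage A k ∂μ := (integral_finsetSum _ fun k _ => integrable_leverage k).symm
    _ ≤ ∫ _, (Fintype.card κ : ℝ) ∂μ :=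
        integral_mono (integrable_finsetSum _ fun k _ => integrable_leverage k)
          (integrable_const _) sum_leverage_le
    _ = Fintype.card κ := by simp

lemma measureReal_le_leverage_le (hμ : ColumnExchangeable μ) (j : ι) {c : ℝ} (hc : 0 < c) :
    μ.real {A | c ≤ leverage A j} ≤ Fintype.card κ / (Fintype.card ι * c) := by
  have : Nonempty ι := ⟨j⟩
  have markov : c * μ.real {A | c ≤ leverage A j} ≤ ∫ A, leverage A j ∂μ :=
    mul_meas_ge_le_integral_of_nonneg (.of_forall fun A => leverage_nonneg A j)
      (integrable_leverage j) c
  rw [le_div_iff₀' (by positivity)]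
  calc Fintype.card ι * c * μ.real {A | c ≤ leverage A j}
      = Fintype.card ι * (c * μ.real {A | c ≤ leverage A j}) := mul_assoc _ _ _
    _ ≤ Fintype.card ι * ∫ A, leverage A j ∂μ := by gcongr
    _ ≤ Fintype.card κ := card_mul_integral_leverage_le hμ j

end Exchangeable

section KernelRadius

variable {p : ℝ≥0∞} [Fact (1 ≤ p)] {m n : ℕ} {σ : Fin m → ℝ} {a : ℝ}

lemma kerSet_eq_ker (A : Fin n → Fin m → ℝ) :
    kerSet A = LinearMap.ker (Matrix.of A).mulVecLin := by
  ext x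
  simp [kerSet, funext_iff, Matrix.mulVec, dotProduct]

lemma one_le_radq_two_kerSet (hσ : ∀ k, σ k ≠ 0)
    (h_compare : ∀ y : Fin m → ℝ, lpnorm p (y / σ) ≤ lpnorm 2 y) (hnm : n < m)
    (A : Fin n → Fin m → ℝ) : 1 ≤ radq 2 (ellipsoid p σ) (kerSet A) := by
  rw [kerSet_eq_ker]
  exact one_le_radq_two hσ h_compare (LinearMap.ker_ne_bot_of_finrank_lt (by simpa))

lemma div_one_add_le_radq_two_kerSet (hσ : ∀ k, 0 < σ k)
    (h_compare : ∀ y : Fin m → ℝ, lpnorm p (y / σ) ≤ a * lpnorm 2 y)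
    {A : Fin n → Fin m → ℝ} {j : Fin m} (h_lt : leverage A j < 1)
    (h_le : a ^ 2 * leverage A j ≤ 1) :
    σ j / (1 + σ j) ≤ radq 2 (ellipsoid p σ) (kerSet A) := by
  obtain ⟨x, hxA, hx_norm, hxj⟩ := exists_mem_kerSet_lpnorm_two_sq_eq A j
  have hx0 : x ≠ 0 := by
    rintro rfl
    rw [Pi.zero_apply] at hxj
    linarith
  rw [kerSet_eq_ker] at hxA ⊢
  exact div_one_add_le_radq_two hσ h_compare hxA hx_norm hx0 (by rwa [hxj, sub_sub_cancel])

variable {μ : Measure (Fin n → Fin m → ℝ)} [IsProbabilityMeasure μ]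

lemma one_sub_le_measure_leverage_lt (hμ : ColumnExchangeable μ) (j : Fin m) {c : ℝ}
    (hc : 0 < c) : ENNReal.ofReal (1 - n / (m * c)) ≤ μ {A | leverage A j < c} := by
  have compl_eq : {A : Fin n → Fin m → ℝ | leverage A j < c} = {A | c ≤ leverage A j}ᶜ := by
    ext A
    simp
  rw [compl_eq, ← ofReal_measureReal,
    probReal_compl_eq_one_sub (measurableSet_le measurable_const (measurable_leverage j))]
  gcongr
  simpa using measureReal_le_leverage_le hμ j hc

theorem one_sub_le_measure_div_one_add_le_radq_two (hμ : ColumnExchangeable μ) (hnm : n < m)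
    (hσ : ∀ k, 0 < σ k) (h_compare : ∀ y : Fin m → ℝ, lpnorm p (y / σ) ≤ a * lpnorm 2 y)
    (j : Fin m) :
    ENNReal.ofReal (1 - n * a ^ 2 / m) ≤
      μ {A | σ j / (1 + σ j) ≤ radq 2 (ellipsoid p σ) (kerSet A)} := by
  rcases le_or_gt a 1 with ha | ha
  · have h_compare_one (y : Fin m → ℝ) : lpnorm p (y / σ) ≤ lpnorm 2 y :=
      (h_compare y).trans (mul_le_of_le_one_left (lpnorm_nonneg y) ha)
    have radius_ge (A : Fin n → Fin m → ℝ) :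
        σ j / (1 + σ j) ≤ radq 2 (ellipsoid p σ) (kerSet A) := by
      have hσj := hσ j
      refine le_trans ?_ (one_le_radq_two_kerSet (fun k => (hσ k).ne') h_compare_one hnm A)
      rw [div_le_one (by positivity)]
      exact le_add_of_nonneg_left zero_le_one
    simp only [radius_ge, Set.ofPred_true, measure_univ]
    exact ENNReal.ofReal_le_one.2 (sub_le_self _ (by positivity))
  · have ha_sq : 1 < a ^ 2 := one_lt_pow₀ ha two_ne_zero
    calc ENNReal.ofReal (1 - n * a ^ 2 / m)
        = ENNReal.ofReal (1 - n / (m * (a ^ 2)⁻¹)) := by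
          congr 2
          field_simp
      _ ≤ μ {A | leverage A j < (a ^ 2)⁻¹} := one_sub_le_measure_leverage_lt hμ j (by positivity)
      _ ≤ μ {A | σ j / (1 + σ j) ≤ radq 2 (ellipsoid p σ) (kerSet A)} := by
          refine measure_mono fun A (hA : leverage A j < (a ^ 2)⁻¹) => ?_
          refine div_one_add_le_radq_two_kerSet hσ h_compare
            (hA.trans (inv_lt_one_of_one_lt₀ ha_sq)) ?_
          exact (le_inv_mul_iff₀ (by positivity)).1 (by simpa using hA.le)

end KernelRadius

instance isProbabilityMeasure_gaussianMatrix (n m : ℕ) :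
    IsProbabilityMeasure (gaussianMatrix n m) := by
  unfold gaussianMatrix
  infer_instance

lemma two_div_pstar (p : ℝ≥0∞) : 2 / pstar p = 2 - 2 / p.toReal := by
  rw [pstar, div_inv_eq_mul]
  ring

lemma mul_sq_rpow_div_div_le {r N M s ε : ℝ} (hM : 0 < M) (hs : 0 < s)
    (hN : N ≤ ε * s ^ 2 * M ^ (2 - 2 / r)) :
    N * (M ^ (1 / r - 1 / 2) / s) ^ 2 / M ≤ ε := by
  have rpow_mul_sq : M ^ (2 - 2 / r) * (M ^ (1 / r - 1 / 2)) ^ 2 = M := by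
    rw [← Real.rpow_natCast, ← Real.rpow_mul hM.le, ← Real.rpow_add hM]
    convert Real.rpow_one M using 2
    push_cast
    ring
  rw [div_le_iff₀ hM, div_pow, mul_div_assoc', div_le_iff₀ (by positivity)]
  calc N * (M ^ (1 / r - 1 / 2)) ^ 2
      ≤ ε * s ^ 2 * M ^ (2 - 2 / r) * (M ^ (1 / r - 1 / 2)) ^ 2 := by gcongr
    _ = ε * M * s ^ 2 := by
        rw [mul_assoc, rpow_mul_sq]
        ring

theorem statement5_general {p : ℝ≥0∞} (hp1 : 1 ≤ p) (hp2 : p ≤ 2) {m n : ℕ} (hnm : n < m)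
    {μ : Measure (Fin n → Fin m → ℝ)} [IsProbabilityMeasure μ] (hμ : ColumnExchangeable μ)
    {s ε : ℝ} (hs : 0 < s) {σ : Fin m → ℝ} (hσ : ∀ k, s ≤ σ k)
    (hn : n ≤ ε * s ^ 2 * (m : ℝ) ^ (2 - 2 / p.toReal)) (j : Fin m) :
    ENNReal.ofReal (1 - ε) ≤
      μ {A | σ j / (1 + σ j) ≤ radq 2 (ellipsoid p σ) (kerSet A)} := by
  have : Fact (1 ≤ p) := ⟨hp1⟩
  have h_compare := lpnorm_div_le_mul_lpnorm_two (one_pos.trans_le hp1).ne' hp2 hs hσ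
  refine le_trans ?_ (one_sub_le_measure_div_one_add_le_radq_two hμ hnm
    (fun k => hs.trans_le (hσ k)) h_compare j)
  gcongr
  exact mul_sq_rpow_div_div_le (by exact_mod_cast n.zero_le.trans_lt hnm) hs hn

/-- For `1 < p ≤ 2`, every `ε ∈ (0,1)`, and all `1 ≤ n < m` with
`n ≤ ε σ_m² m^{2/p*}`, with probability at least `1 - ε` one has
`rad(E^m_{p,σ}, ker G_{n,m}) ≥ σ₁/(1 + σ₁)`.
(Here `σ : Fin m → ℝ` is 0-indexed, i.e. `σ ⟨j-1⟩` is the paper's `σ_j`.) -/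
theorem statement5 (p : ℝ≥0∞) (hp1 : 1 < p) (hp2 : p ≤ 2) :
    ∀ ε : ℝ, 0 < ε → ε < 1 →
    ∀ (m n : ℕ) (hn : 1 ≤ n) (hnm : n < m),
    ∀ σ : Fin m → ℝ, (∀ j, 0 < σ j) → (∀ i j : Fin m, i ≤ j → σ j ≤ σ i) →
    (n : ℝ) ≤ ε * σ ⟨m - 1, by omega⟩ ^ 2 * (m : ℝ) ^ (2 / pstar p) →
    ENNReal.ofReal (1 - ε) ≤
      gaussianMatrix n m {A |
        σ ⟨0, by omega⟩ / (1 + σ ⟨0, by omega⟩) ≤ radq 2 (ellipsoid p σ) (kerSet A)} := by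
  intro ε _ _ m n _ hnm σ hσ_pos hσ_anti hn
  rw [two_div_pstar] at hn
  exact statement5_general hp1.le hp2 hnm (columnExchangeable_pi _) (hσ_pos _)
    (fun k => hσ_anti k _ (Nat.le_pred_of_lt k.isLt)) hn _
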